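/- For every η ∈ (0,1) and q ∈ [2,∞) there exists a constant K = K(η,q) ∈ (0,∞) with the following property. If (X,‖·‖_X) is a Banach space satisfying δ_X(ε) ≥ (ηε)^q for every ε ∈ (0,1), then for every n ∈ ℕ and every function f : ℍ → X one has ∑_{k=1}^{n²} ∑_{x ∈ B_n} ‖f(xc^k) − f(x)‖_X^q / k^{1+q/2} ≤ K ∑_{x ∈ B_{21n}} (‖f(xa) − f(x)‖_X^q + ‖f(xb) − f(x)‖_X^q). -/

import Mathlib

/-- The discrete Heisenberg group, as ℤ³ with the Heisenberg multiplication
(equivalently, unit upper-triangular 3×3 integer matrices). -/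
@[ext]
structure DH where
  x : ℤ
  y : ℤ
  z : ℤ

namespace DH

instance : Mul DH := ⟨fun a b => ⟨a.x + b.x, a.y + b.y, a.z + b.z + a.x * b.y⟩⟩
instance : One DH := ⟨⟨0, 0, 0⟩⟩
instance : Inv DH := ⟨fun a => ⟨-a.x, -a.y, -a.z + a.x * a.y⟩⟩

lemma mul_def (a b : DH) : a * b = ⟨a.x + b.x, a.y + b.y, a.z + b.z + a.x * b.y⟩ := rfl
lemma one_def : (1 : DH) = ⟨0, 0, 0⟩ := rfl
lemma inv_def (a : DH) : a⁻¹ = ⟨-a.x, -a.y, -a.z + a.x * a.y⟩ := rfl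

instance : Group DH where
  mul_assoc a b c := by
    simp only [mul_def, mk.injEq]
    refine ⟨by ring, by ring, by ring⟩
  one_mul a := by simp [mul_def, one_def]
  mul_one a := by simp [mul_def, one_def]
  inv_mul_cancel a := by
    simp only [mul_def, inv_def, one_def, mk.injEq]
    refine ⟨by ring, by ring, by ring⟩

/-- The generator `a`. -/
def gA : DH := ⟨1, 0, 0⟩

/-- The generator `b`. -/
def gB : DH := ⟨0, 1, 0⟩

/-- The commutator `c = aba⁻¹b⁻¹`, a generator of the center. -/
def gC : DH := gA * gB * gA⁻¹ * gB⁻¹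

/-- Word length with respect to the symmetric generating set `{a, b, a⁻¹, b⁻¹}`. -/
noncomputable def wordLen (g : DH) : ℕ :=
  sInf {n | ∃ l : List DH, l.length = n ∧
    (∀ s ∈ l, s ∈ ({gA, gB, gA⁻¹, gB⁻¹} : Set DH)) ∧ l.prod = g}

/-- The left-invariant word metric on the discrete Heisenberg group. -/
noncomputable def dW (g h : DH) : ℕ := wordLen (g⁻¹ * h)

/-- The closed ball of radius `n` centered at the identity. -/
def Ball (n : ℕ) : Set DH := {g | dW g 1 ≤ n}

end DH

/-!
Uniform convexity is used through its homogeneous two-point form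
`‖(u + v) / 2‖ ^ q + κ ‖u - v‖ ^ q ≤ (‖u‖ ^ q + ‖v‖ ^ q) / 2`. Applied to averages of a function
over consecutive segments of length `2 ^ j` of the orbits of `c`, it telescopes over `j` and bounds
`∑_j ‖D_j f‖ ^ q` by `‖f‖ ^ q`, where `D_j f` is the difference of consecutive averages and the
norms are those of `ℓ ^ q`. Since `c` is central, it also bounds `∑_j ‖∂_s D_j f‖ ^ q` by
`‖∂_s f‖ ^ q` for every generator `s`.

The element `c ^ (2 ^ j)` has word length `O(2 ^ (j / 2))`, so `D_j f` agrees with half of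
`D_{j + 1} f` up to `O(2 ^ (j / 2))` horizontal derivatives of `D_j f`. After normalisation by
`2 ^ (-j / 2)` the factor `1 / 2` becomes `1 / √2 < 1`, and the recursion bounds the normalised
vertical differences by the horizontal gradient. Finally, `∂_{c ^ k} f` is a sum of vertical
differences of scales at most `k`, which a discrete Hardy inequality resums.
-/

section ScalarInequalities

open Finset

variable {q : ℝ}

lemma mul_add_rpow_le {ρ a b : ℝ} (hq : 1 ≤ q) (hρ : 0 ≤ ρ) (hρ₁ : ρ < 1) (ha : 0 ≤ a)
    (hb : 0 ≤ b) :
    (ρ * a + b) ^ q ≤ ρ * a ^ q + (1 - ρ) * ((1 - ρ)⁻¹ * b) ^ q := by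
  have h₀ : 0 < 1 - ρ := sub_pos.2 hρ₁
  have h := (convexOn_rpow hq).2 (Set.mem_Ici.2 ha)
    (Set.mem_Ici.2 (by positivity : 0 ≤ (1 - ρ)⁻¹ * b)) hρ h₀.le (add_sub_cancel ρ 1)
  simpa only [smul_eq_mul, mul_inv_cancel_left₀ h₀.ne'] using h

lemma sum_rpow_le_of_le_mul_add {ρ : ℝ} (hq : 1 ≤ q) (hρ : 0 ≤ ρ) (hρ₁ : ρ < 1) {s b : ℕ → ℝ}
    (hs : ∀ j, 0 ≤ s j) (hb : ∀ j, 0 ≤ b j) {J : ℕ} (h : ∀ j < J, s (j + 1) ≤ ρ * s j + b j) :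
    ∑ j ∈ range (J + 1), s j ^ q ≤ ((1 - ρ)⁻¹) ^ q * (s 0 ^ q + ∑ j ∈ range J, b j ^ q) := by
  have h₀ : 0 < 1 - ρ := sub_pos.2 hρ₁
  set Λ : ℝ := ((1 - ρ)⁻¹) ^ q
  have hΛ : 1 ≤ (1 - ρ) * Λ := by
    rw [← inv_le_iff_one_le_mul₀' h₀]
    exact Real.self_le_rpow_of_one_le ((one_le_inv₀ h₀).2 (by linarith)) hq
  have hstep : ∀ j ∈ range J, s (j + 1) ^ q ≤ ρ * s j ^ q + (1 - ρ) * (Λ * b j ^ q) := by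
    intro j hj
    rw [← Real.mul_rpow (inv_nonneg.2 h₀.le) (hb j)]
    exact (Real.rpow_le_rpow (hs _) (h j (mem_range.1 hj)) (by linarith)).trans
      (mul_add_rpow_le hq hρ hρ₁ (hs j) (hb j))
  have hsum := sum_le_sum hstep
  simp only [sum_add_distrib, ← mul_sum] at hsum
  have hhead := sum_range_succ' (fun j => s j ^ q) J
  have hlast := sum_range_succ (fun j => s j ^ q) J
  have hJ : 0 ≤ ρ * s J ^ q := mul_nonneg hρ (Real.rpow_nonneg (hs J) q)
  have hzero : s 0 ^ q ≤ (1 - ρ) * Λ * s 0 ^ q :=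
    le_mul_of_one_le_left (Real.rpow_nonneg (hs 0) q) hΛ
  refine le_of_mul_le_mul_left ?_ h₀
  linear_combination hhead + hsum + hzero + hJ - ρ * hlast

lemma sum_rpow_le_of_le_mul_succ_add {ρ : ℝ} (hq : 1 ≤ q) (hρ : 0 ≤ ρ) (hρ₁ : ρ < 1)
    {s b : ℕ → ℝ} (hs : ∀ j, 0 ≤ s j) (hb : ∀ j, 0 ≤ b j) {J : ℕ}
    (h : ∀ j < J, s j ≤ ρ * s (j + 1) + b j) :
    ∑ j ∈ range (J + 1), s j ^ q ≤ ((1 - ρ)⁻¹) ^ q * (s J ^ q + ∑ j ∈ range J, b j ^ q) := by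
  rw [← sum_range_reflect, ← sum_range_reflect (fun j => b j ^ q)]
  refine sum_rpow_le_of_le_mul_add hq hρ hρ₁ (fun j => hs _) (fun j => hb _) fun j hj => ?_
  have h₁ : J + 1 - 1 - (j + 1) = J - 1 - j := by lia
  have h₂ : J + 1 - 1 - j = J - 1 - j + 1 := by lia
  rw [h₁, h₂]
  exact h _ (by lia)

lemma sum_geometric_mean_rpow_le {r : ℝ} (hq : 1 ≤ q) (hr : 1 < r) {a : ℕ → ℝ}
    (ha : ∀ j, 0 ≤ a j) (J : ℕ) :
    ∑ j ∈ range (J + 1), ((r ^ j)⁻¹ * ∑ i ∈ range (j + 1), r ^ i * a i) ^ q ≤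
      ((1 - r⁻¹)⁻¹) ^ q * ∑ j ∈ range (J + 1), a j ^ q := by
  have hr₀ : 0 < r := one_pos.trans hr
  have h := sum_rpow_le_of_le_mul_add hq (inv_nonneg.2 hr₀.le) (inv_lt_one_of_one_lt₀ hr) (J := J)
    (s := fun j => (r ^ j)⁻¹ * ∑ i ∈ range (j + 1), r ^ i * a i) (b := fun j => a (j + 1))
    (fun j => mul_nonneg (by positivity) (sum_nonneg fun i _ => mul_nonneg (by positivity) (ha i)))
    (fun j => ha (j + 1)) fun j _ => by
      rw [sum_range_succ _ (j + 1), mul_add, inv_mul_cancel_left₀ (by positivity), pow_succ',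
        mul_inv, mul_assoc]
  rwa [zero_add, sum_range_one, pow_zero, inv_one, one_mul, one_mul, add_comm (a 0 ^ q),
    ← sum_range_succ' fun j => a j ^ q] at h

lemma sum_Icc_le_sum_dyadic {N : ℕ} {v φ : ℕ → ℝ} (hφ : ∀ j, 0 ≤ φ j)
    (hv : ∀ k ∈ Icc 1 N, v k ≤ ((2 : ℝ) ^ Nat.log 2 k)⁻¹ * φ (Nat.log 2 k)) :
    ∑ k ∈ Icc 1 N, v k ≤ ∑ j ∈ range (Nat.log 2 N + 1), φ j := by
  have hmaps : ∀ k ∈ Icc 1 N, Nat.log 2 k ∈ range (Nat.log 2 N + 1) := fun k hk =>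
    mem_range_succ_iff.2 (Nat.log_mono_right (mem_Icc.1 hk).2)
  rw [← sum_fiberwise_of_maps_to hmaps]
  refine sum_le_sum fun j _ => ?_
  have hsub : {k ∈ Icc 1 N | Nat.log 2 k = j} ⊆ Ico (2 ^ j) (2 ^ (j + 1)) := by
    intro k hk
    obtain ⟨hkN, rfl⟩ := mem_filter.1 hk
    exact mem_Ico.2 ⟨Nat.pow_log_le_self 2 (Nat.one_le_iff_ne_zero.1 (mem_Icc.1 hkN).1),
      Nat.lt_pow_succ_log_self one_lt_two k⟩
  have hcard : #{k ∈ Icc 1 N | Nat.log 2 k = j} ≤ 2 ^ j := by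
    refine (card_le_card hsub).trans ?_
    rw [Nat.card_Ico, pow_succ]
    lia
  calc ∑ k ∈ Icc 1 N with Nat.log 2 k = j, v k
      ≤ ∑ k ∈ Icc 1 N with Nat.log 2 k = j, ((2 : ℝ) ^ j)⁻¹ * φ j :=
        sum_le_sum fun k hk => by
          obtain ⟨hkN, rfl⟩ := mem_filter.1 hk
          exact hv k hkN
    _ = #{k ∈ Icc 1 N | Nat.log 2 k = j} * ((2 : ℝ) ^ j)⁻¹ * φ j := by
        rw [sum_const, nsmul_eq_mul, mul_assoc]
    _ ≤ φ j := by
        refine mul_le_of_le_one_left (hφ j) ?_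
        rw [← div_eq_mul_inv, div_le_one (by positivity)]
        exact_mod_cast hcard

lemma inv_one_sub_inv_sqrt_two_pos : 0 < (1 - (√2)⁻¹)⁻¹ :=
  inv_pos.2 (sub_pos.2 (inv_lt_one_of_one_lt₀ Real.one_lt_sqrt_two))

lemma sq_rpow_half {a : ℝ} (ha : 0 ≤ a) (q : ℝ) : (a ^ 2) ^ (q / 2) = a ^ q := by
  rw [← Real.rpow_natCast_mul ha, Nat.cast_ofNat, mul_div_cancel₀ q two_ne_zero]

lemma one_add_half_rpow_le (hq : 1 ≤ q) {s : ℝ} (hs : 0 ≤ s) :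
    ((1 + s) / 2) ^ q ≤ (1 + s ^ q) / 2 := by
  have h := (convexOn_rpow hq).2 (Set.mem_Ici.2 zero_le_one) (Set.mem_Ici.2 hs)
    (by norm_num : (0 : ℝ) ≤ 2⁻¹) (by norm_num : (0 : ℝ) ≤ 2⁻¹) (by norm_num)
  simp only [smul_eq_mul, Real.one_rpow, ← mul_add] at h
  rwa [inv_mul_eq_div, inv_mul_eq_div] at h

lemma half_add_rpow_add_half_sub_rpow_le (hq : 2 ≤ q) {s t : ℝ} (hs : 0 ≤ s) (hst : s ≤ t) :
    ((t + s) / 2) ^ q + ((t - s) / 2) ^ q ≤ (t ^ q + s ^ q) / 2 := by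
  have hq₂ : 1 ≤ q / 2 := by linarith
  calc ((t + s) / 2) ^ q + ((t - s) / 2) ^ q
      = (((t + s) / 2) ^ 2) ^ (q / 2) + (((t - s) / 2) ^ 2) ^ (q / 2) := by
        rw [sq_rpow_half (by linarith), sq_rpow_half (by linarith)]
    _ ≤ (((t + s) / 2) ^ 2 + ((t - s) / 2) ^ 2) ^ (q / 2) :=
        Real.add_rpow_le_rpow_add (sq_nonneg _) (sq_nonneg _) hq₂
    _ = (2⁻¹ * t ^ 2 + 2⁻¹ * s ^ 2) ^ (q / 2) := by ring_nf
    _ ≤ 2⁻¹ * (t ^ 2) ^ (q / 2) + 2⁻¹ * (s ^ 2) ^ (q / 2) :=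
        (convexOn_rpow hq₂).2 (sq_nonneg t) (sq_nonneg s) (by norm_num) (by norm_num) (by norm_num)
    _ = (t ^ q + s ^ q) / 2 := by
        rw [sq_rpow_half (hs.trans hst), sq_rpow_half hs]
        ring

end ScalarInequalities

section UniformConvexity

variable {X : Type*} [NormedAddCommGroup X] [NormedSpace ℝ X] {η κ q : ℝ}

variable (X η q) in
/-- The modulus of convexity of `X` is of power type `q`: `δ_X(ε) ≥ (η ε) ^ q` for `ε ∈ (0, 1)`. -/
def HasPowerTypeModulus : Prop :=
  ∀ ε ∈ Set.Ioo (0 : ℝ) 1, ∀ x y : X, ‖x‖ = 1 → ‖y‖ = 1 → ε ≤ ‖x - y‖ →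
    ‖x + y‖ ≤ 2 * (1 - (η * ε) ^ q)

variable (X κ q) in
/-- The `q`-uniform convexity inequality with constant `κ`: the homogeneous two-point form of
uniform convexity, in which it can be summed over a measure space. -/
def UniformConvexityInequality : Prop :=
  ∀ u v : X, ‖(2⁻¹ : ℝ) • (u + v)‖ ^ q + κ * ‖u - v‖ ^ q ≤ (‖u‖ ^ q + ‖v‖ ^ q) / 2

lemma HasPowerTypeModulus.norm_add_smul_le (h : HasPowerTypeModulus X η q) {ε s : ℝ}
    (hε : ε ∈ Set.Ioo (0 : ℝ) 1) (hs : 0 ≤ s) (hs₁ : s ≤ 1) {u w : X} (hu : ‖u‖ = 1)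
    (hw : ‖w‖ = 1) (huw : ε ≤ ‖u - w‖) :
    ‖u + s • w‖ ≤ 1 + s - 2 * s * (η * ε) ^ q :=
  calc ‖u + s • w‖ = ‖s • (u + w) + (1 - s) • u‖ := by congr 1; module
    _ ≤ s * ‖u + w‖ + (1 - s) := by
        refine (norm_add_le _ _).trans_eq ?_
        rw [norm_smul_of_nonneg hs, norm_smul_of_nonneg (sub_nonneg.2 hs₁), hu, mul_one]
    _ ≤ s * (2 * (1 - (η * ε) ^ q)) + (1 - s) := by gcongr; exact h ε hε u w hu hw huw
    _ = 1 + s - 2 * s * (η * ε) ^ q := by ring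

lemma norm_midpoint_rpow_add_le_of_norm_sub_le (hq : 2 ≤ q) {s : ℝ} (hs : 0 ≤ s) (hs₁ : s ≤ 1)
    {u w : X} (hu : ‖u‖ = 1) (hw : ‖w‖ = 1) {r : ℝ} (hr : 0 ≤ r)
    (hru : r * ‖u - s • w‖ ≤ (1 - s) / 2) :
    ‖(2⁻¹ : ℝ) • (u + s • w)‖ ^ q + (r * ‖u - s • w‖) ^ q ≤ (1 + s ^ q) / 2 := by
  have : 0 ≤ q := by linarith
  have hmid : ‖(2⁻¹ : ℝ) • (u + s • w)‖ ≤ (1 + s) / 2 := by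
    have h := norm_add_le u (s • w)
    rw [norm_smul_of_nonneg hs, hu, hw] at h
    rw [norm_smul_of_nonneg (by norm_num)]
    linarith
  calc ‖(2⁻¹ : ℝ) • (u + s • w)‖ ^ q + (r * ‖u - s • w‖) ^ q
      ≤ ((1 + s) / 2) ^ q + ((1 - s) / 2) ^ q := by gcongr
    _ ≤ (1 ^ q + s ^ q) / 2 := half_add_rpow_add_half_sub_rpow_le hq hs hs₁
    _ = (1 + s ^ q) / 2 := by rw [Real.one_rpow]

lemma HasPowerTypeModulus.norm_midpoint_rpow_add_le_of_lt_norm_sub (h : HasPowerTypeModulus X η q)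
    (hη : 0 ≤ η) (hη₁ : η ≤ 1) (hq : 1 ≤ q) {s : ℝ} (hs : 0 ≤ s) (hs₁ : s ≤ 1) {u w : X}
    (hu : ‖u‖ = 1) (hw : ‖w‖ = 1) (hd : 4 * (1 - s) < ‖u - s • w‖) :
    ‖(2⁻¹ : ℝ) • (u + s • w)‖ ^ q + (η / 16 * ‖u - s • w‖) ^ q ≤ (1 + s ^ q) / 2 := by
  set d := ‖u - s • w‖
  set m := (1 + s) / 2 with hm
  set δ := (η * (d / 4)) ^ q with hδ
  have hd₂ : d ≤ 1 + s := by
    simpa only [norm_smul_of_nonneg hs, hu, hw, mul_one] using norm_sub_le u (s • w)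
  have huw : d / 4 ≤ ‖u - w‖ := by
    have h₁ : d ≤ ‖u - w‖ + ‖(1 - s) • w‖ := by
      simpa only [d, show u - s • w = u - w + (1 - s) • w by module] using norm_add_le _ _
    rw [norm_smul_of_nonneg (by linarith), hw] at h₁
    linarith
  have hδ₀ : 0 ≤ δ := Real.rpow_nonneg (mul_nonneg hη (by linarith)) q
  have hδ₁ : δ ≤ 1 :=
    Real.rpow_le_one (mul_nonneg hη (by linarith)) (by nlinarith) (by linarith)
  have hmid : ‖(2⁻¹ : ℝ) • (u + s • w)‖ ≤ m * (1 - δ / 2) := by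
    have h₁ := h.norm_add_smul_le ⟨by linarith, by linarith⟩ hs hs₁ hu hw huw
    rw [norm_smul_of_nonneg (by norm_num)]
    nlinarith
  have hmid_rpow : ‖(2⁻¹ : ℝ) • (u + s • w)‖ ^ q ≤ m ^ q * (1 - δ / 2) := by
    refine (Real.rpow_le_rpow (norm_nonneg _) hmid (by linarith)).trans ?_
    rw [Real.mul_rpow (by linarith) (by linarith)]
    gcongr
    exact Real.rpow_le_self_of_le_one (by linarith) (by linarith) hq
  have hdiff : (η / 16 * d) ^ q ≤ m ^ q * (δ / 2) :=
    calc (η / 16 * d) ^ q = 2⁻¹ ^ q * (δ * 2⁻¹ ^ q) := by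
          rw [hδ, ← Real.mul_rpow (mul_nonneg hη (by linarith)) (by norm_num),
            ← Real.mul_rpow (by norm_num) (by positivity)]
          congr 1; ring
      _ ≤ m ^ q * (δ * 2⁻¹) := by
          gcongr
          · linarith
          · exact Real.rpow_le_self_of_le_one (by norm_num) (by norm_num) hq
      _ = m ^ q * (δ / 2) := by rw [div_eq_mul_inv]
  have hconv : m ^ q ≤ (1 + s ^ q) / 2 := one_add_half_rpow_le hq hs
  linarith

theorem HasPowerTypeModulus.uniformConvexityInequality (h : HasPowerTypeModulus X η q)
    (hη : 0 ≤ η) (hη₁ : η ≤ 1) (hq : 2 ≤ q) :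
    UniformConvexityInequality X ((η / 16) ^ q) q := by
  intro u v
  wlog hvu : ‖v‖ ≤ ‖u‖ generalizing u v
  · simpa only [add_comm, norm_sub_rev] using this v u (le_of_not_ge hvu)
  rcases (norm_nonneg u).eq_or_lt with hu | hu
  · obtain rfl : u = 0 := norm_eq_zero.1 hu.symm
    obtain rfl : v = 0 := norm_le_zero_iff.1 (by simpa using hvu)
    simp [Real.zero_rpow (by linarith : q ≠ 0)]
  obtain ⟨R, e, he, rfl, hR⟩ : ∃ (R : ℝ) (e : X), ‖e‖ = 1 ∧ u = R • e ∧ 0 < R :=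
    ⟨‖u‖, ‖u‖⁻¹ • u, by simp [norm_smul, hu.ne'], by rw [smul_inv_smul₀ hu.ne'], hu⟩
  obtain ⟨s, w, hw, rfl, hs⟩ : ∃ (s : ℝ) (w : X), ‖w‖ = 1 ∧ v = R • s • w ∧ 0 ≤ s := by
    rcases eq_or_ne v 0 with rfl | hv
    · exact ⟨0, e, he, by simp, le_rfl⟩
    · refine ⟨R⁻¹ * ‖v‖, ‖v‖⁻¹ • v, by simp [norm_smul, hv], ?_, by positivity⟩
      rw [smul_smul, mul_inv_cancel_left₀ hR.ne', smul_inv_smul₀ (norm_ne_zero_iff.2 hv)]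
  have hs₁ : s ≤ 1 := by
    rwa [norm_smul_of_nonneg hR.le, norm_smul_of_nonneg hR.le, norm_smul_of_nonneg hs, he, hw,
      mul_one, mul_le_mul_iff_right₀ hR] at hvu
  have hunit : ‖(2⁻¹ : ℝ) • (e + s • w)‖ ^ q + (η / 16 * ‖e - s • w‖) ^ q ≤ (1 + s ^ q) / 2 := by
    rcases le_or_gt ‖e - s • w‖ (4 * (1 - s)) with hd | hd
    · exact norm_midpoint_rpow_add_le_of_norm_sub_le hq hs hs₁ he hw (by positivity)
        (by nlinarith [norm_nonneg (e - s • w)])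
    · exact h.norm_midpoint_rpow_add_le_of_lt_norm_sub hη hη₁ (by linarith) hs hs₁ he hw hd
  rw [← smul_add, ← smul_sub, smul_comm]
  simp only [norm_smul_of_nonneg hR.le, norm_smul_of_nonneg hs, he, hw, mul_one,
    Real.mul_rpow hR.le (norm_nonneg _), Real.mul_rpow hR.le hs]
  rw [Real.mul_rpow (by positivity) (norm_nonneg _)] at hunit
  linear_combination R ^ q * hunit

end UniformConvexity

section LqNorm

open Finset

variable {α β X : Type*} [SeminormedAddCommGroup X] {q : ℝ}

/-- The `ℓ^q` norm of the restriction of `u` to the finite set `A`. -/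
noncomputable def lqNorm (q : ℝ) (A : Finset α) (u : α → X) : ℝ :=
  (∑ x ∈ A, ‖u x‖ ^ q) ^ (1 / q)

lemma lqNorm_nonneg (q : ℝ) (A : Finset α) (u : α → X) : 0 ≤ lqNorm q A u := by
  unfold lqNorm
  positivity

lemma lqNorm_rpow (hq : q ≠ 0) (A : Finset α) (u : α → X) :
    lqNorm q A u ^ q = ∑ x ∈ A, ‖u x‖ ^ q := by
  rw [lqNorm, one_div, Real.rpow_inv_rpow (by positivity) hq]

lemma lqNorm_zero (hq : q ≠ 0) (A : Finset α) : lqNorm q A (0 : α → X) = 0 := by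
  simp [lqNorm, Real.zero_rpow hq, Real.zero_rpow (inv_ne_zero hq)]

lemma lqNorm_add_le (hq : 1 ≤ q) (A : Finset α) (u v : α → X) :
    lqNorm q A (u + v) ≤ lqNorm q A u + lqNorm q A v :=
  calc lqNorm q A (u + v) ≤ (∑ x ∈ A, (‖u x‖ + ‖v x‖) ^ q) ^ (1 / q) := by
        unfold lqNorm
        gcongr
        exact norm_add_le _ _
    _ ≤ lqNorm q A u + lqNorm q A v :=
        Real.Lp_add_le_of_nonneg A hq (fun _ _ => norm_nonneg _) fun _ _ => norm_nonneg _

lemma lqNorm_sum_le {ι : Type*} (hq : 1 ≤ q) (A : Finset α) (s : Finset ι) (u : ι → α → X) :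
    lqNorm q A (∑ i ∈ s, u i) ≤ ∑ i ∈ s, lqNorm q A (u i) :=
  le_sum_of_subadditive _ (lqNorm_zero (by linarith) A).le (lqNorm_add_le hq A) s u

lemma lqNorm_const_smul [NormedSpace ℝ X] (hq : q ≠ 0) (t : ℝ) (A : Finset α) (u : α → X) :
    lqNorm q A (t • u) = ‖t‖ * lqNorm q A u := by
  simp only [lqNorm, Pi.smul_apply, norm_smul, Real.mul_rpow (norm_nonneg _) (norm_nonneg _),
    ← mul_sum]
  rw [Real.mul_rpow (by positivity) (by positivity), one_div, Real.rpow_rpow_inv (norm_nonneg t) hq]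

lemma sum_comp_le_sum_of_injective {A : Finset α} {B : Finset β} {e : α → β}
    (he : Function.Injective e) (hAB : ∀ x ∈ A, e x ∈ B) {v : β → ℝ} (hv : ∀ y, 0 ≤ v y) :
    ∑ x ∈ A, v (e x) ≤ ∑ y ∈ B, v y :=
  calc ∑ x ∈ A, v (e x) = ∑ y ∈ A.map ⟨e, he⟩, v y := (sum_map A ⟨e, he⟩ v).symm
    _ ≤ ∑ y ∈ B, v y :=
        sum_le_sum_of_subset_of_nonneg (map_subset_iff_subset_preimage.2 fun x hx => by
          simpa using hAB x hx) fun y _ _ => hv y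

lemma lqNorm_le_of_injective (hq : 0 ≤ q) {A : Finset α} {B : Finset β} {e : α → β}
    (he : Function.Injective e) (hAB : ∀ x ∈ A, e x ∈ B) {u : α → X} {v : β → X}
    (huv : ∀ x ∈ A, ‖u x‖ = ‖v (e x)‖) :
    lqNorm q A u ≤ lqNorm q B v := by
  unfold lqNorm
  gcongr ?_ ^ _
  rw [sum_congr rfl fun x hx => by rw [huv x hx]]
  exact sum_comp_le_sum_of_injective he hAB (v := fun y => ‖v y‖ ^ q) fun y => by positivity

lemma lqNorm_mono (hq : 0 ≤ q) {A B : Finset α} (h : A ⊆ B) (u : α → X) :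
    lqNorm q A u ≤ lqNorm q B u :=
  lqNorm_le_of_injective hq Function.injective_id h fun _ _ => rfl

end LqNorm

section WordBall

open Finset
open scoped Pointwise

variable {G : Type*} [Group G] [DecidableEq G] {T : Finset G}

/-- The set of elements of `G` of word length at most `n` over the alphabet `T ∪ T⁻¹`. -/
def wordBall (T : Finset G) (n : ℕ) : Finset G := insert 1 (T ∪ T⁻¹) ^ n

lemma wordBall_mono {m n : ℕ} (h : m ≤ n) : wordBall T m ⊆ wordBall T n :=
  pow_subset_pow_right (mem_insert_self _ _) h

lemma one_mem_wordBall (n : ℕ) : (1 : G) ∈ wordBall T n :=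
  wordBall_mono n.zero_le (by simp [wordBall])

lemma mul_mem_wordBall {m n : ℕ} {g h : G} (hg : g ∈ wordBall T m) (hh : h ∈ wordBall T n) :
    g * h ∈ wordBall T (m + n) := by
  rw [wordBall, pow_add]
  exact mul_mem_mul hg hh

lemma mem_wordBall_one {g : G} (hg : g ∈ T) : g ∈ wordBall T 1 := by
  simp [wordBall, hg]

lemma pow_mem_wordBall {g : G} (hg : g ∈ wordBall T 1) (n : ℕ) : g ^ n ∈ wordBall T n := by
  rw [wordBall, pow_one] at hg
  exact pow_mem_pow hg

lemma inv_mem_wordBall {n : ℕ} {g : G} (hg : g ∈ wordBall T n) : g⁻¹ ∈ wordBall T n := by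
  have h : (insert 1 (T ∪ T⁻¹))⁻¹ = insert 1 (T ∪ T⁻¹) := by
    ext
    simp [or_comm]
  rw [wordBall, ← h, inv_pow]
  exact inv_mem_inv hg

lemma exists_mem_wordBall_of_mem_closure {g : G} (hg : g ∈ Subgroup.closure (T : Set G)) :
    ∃ n, g ∈ wordBall T n := by
  induction hg using Subgroup.closure_induction with
  | mem s hs => exact ⟨1, mem_wordBall_one hs⟩
  | one => exact ⟨0, one_mem_wordBall 0⟩
  | mul g h _ _ hg hh =>
    obtain ⟨m, hg⟩ := hg
    obtain ⟨n, hh⟩ := hh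
    exact ⟨m + n, mul_mem_wordBall hg hh⟩
  | inv g _ hg =>
    obtain ⟨n, hg⟩ := hg
    exact ⟨n, inv_mem_wordBall hg⟩

lemma mem_wordBall_iff_exists_list {n : ℕ} {g : G} :
    g ∈ wordBall T n ↔ ∃ l : List G, l.length ≤ n ∧ (∀ s ∈ l, s ∈ T ∪ T⁻¹) ∧ l.prod = g := by
  constructor
  · intro hg
    induction n generalizing g with
    | zero => exact ⟨[], le_rfl, by simp, by simpa [wordBall, eq_comm] using hg⟩
    | succ n ih =>
      rw [wordBall, pow_succ'] at hg
      obtain ⟨s, hs, h, hh, rfl⟩ := mem_mul.1 hg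
      obtain ⟨l, hl, hlT, rfl⟩ := ih hh
      rcases mem_insert.1 hs with rfl | hs
      · exact ⟨l, hl.trans n.le_succ, hlT, (one_mul _).symm⟩
      · exact ⟨s :: l, Nat.succ_le_succ hl, List.forall_mem_cons.2 ⟨hs, hlT⟩, List.prod_cons⟩
  · rintro ⟨l, hl, hlT, rfl⟩
    refine wordBall_mono hl ?_
    clear hl
    induction l with
    | nil => exact one_mem_wordBall 0
    | cons s l ih =>
      obtain ⟨hs, hl⟩ := List.forall_mem_cons.1 hlT
      rw [List.prod_cons, List.length_cons, add_comm]
      exact mul_mem_wordBall (by simpa [wordBall] using Or.inr (by simpa using hs)) (ih hl)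

/-- Quadratic distortion of the cyclic subgroup generated by `c`: the power `c ^ k` has word length
`O(√k)`. It is stated with `n = ⌈√k⌉` in mind. -/
def QuadraticallyDistorted (T : Finset G) (C : ℕ) (c : G) : Prop :=
  ∀ n k : ℕ, k ≤ n ^ 2 → c ^ k ∈ wordBall T (C * n)

end WordBall

section Averages

open Finset

variable {G X : Type*} [Group G] [AddCommGroup X] {c : G}

/-- The right difference `∂_g f` of `f` in the direction `g`. -/
def rightDiff (g : G) (f : G → X) (x : G) : X := f (x * g) - f x

lemma rightDiff_one (f : G → X) : rightDiff 1 f = 0 := by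
  funext x
  simp [rightDiff]

lemma rightDiff_mul (g h : G) (f : G → X) :
    rightDiff (g * h) f = (fun x => rightDiff h f (x * g)) + rightDiff g f := by
  funext x
  simp [rightDiff, mul_assoc]

lemma rightDiff_comm {g h : G} (hgh : Commute g h) (f : G → X) :
    rightDiff g (rightDiff h f) = rightDiff h (rightDiff g f) := by
  funext x
  simp only [rightDiff, mul_assoc, hgh.eq]
  abel

variable [Module ℝ X]

/-- The average of `f` over the segments `x, x c, …, x c ^ (m - 1)` of the orbits of `c`. -/
noncomputable def vertAvg (c : G) (m : ℕ) (f : G → X) (x : G) : X :=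
  (m : ℝ)⁻¹ • ∑ i ∈ range m, f (x * c ^ i)

/-- The difference of the averages of `f` over the two consecutive segments of length `m` that start
at `x * c ^ m` and at `x`. -/
noncomputable def vertDiff (c : G) (m : ℕ) (f : G → X) : G → X := rightDiff (c ^ m) (vertAvg c m f)

lemma vertAvg_one (c : G) (f : G → X) : vertAvg c 1 f = f := by
  funext x
  simp [vertAvg]

lemma vertAvg_two_mul (c : G) (m : ℕ) (f : G → X) (x : G) :
    vertAvg c (2 * m) f x = (2⁻¹ : ℝ) • (vertAvg c m f x + vertAvg c m f (x * c ^ m)) := by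
  simp only [vertAvg, two_mul m, sum_range_add, pow_add, mul_assoc, ← smul_add, smul_smul]
  congr 1
  push_cast
  rw [← two_mul, mul_inv]

lemma rightDiff_vertAvg {g : G} (h : Commute g c) (m : ℕ) (f : G → X) :
    rightDiff g (vertAvg c m f) = vertAvg c m (rightDiff g f) := by
  funext x
  simp only [rightDiff, vertAvg, ← smul_sub, ← sum_sub_distrib, mul_assoc, (h.pow_right _).eq]

lemma rightDiff_vertDiff {g : G} (h : Commute g c) (m : ℕ) (f : G → X) :
    rightDiff g (vertDiff c m f) = vertDiff c m (rightDiff g f) := by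
  rw [vertDiff, rightDiff_comm (h.pow_right m), rightDiff_vertAvg h, vertDiff]

lemma vertDiff_eq_half_smul_vertDiff_two_mul_add (c : G) (m : ℕ) (f : G → X) :
    vertDiff c m f = (1 / 2 : ℝ) • vertDiff c (2 * m) f
      + ((-1 / 2 : ℝ) • rightDiff (c ^ m) (vertDiff c m f)
        + (-1 / 4 : ℝ) • rightDiff (c ^ (2 * m)) (vertDiff c m f)) := by
  funext x
  simp only [vertDiff, rightDiff, vertAvg_two_mul, Pi.add_apply, Pi.smul_apply]
  simp only [two_mul m, pow_add, ← mul_assoc]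
  module

end Averages

section LittlewoodPaley

open Finset

variable {G X : Type*} [Group G] [NormedAddCommGroup X] [NormedSpace ℝ X] {c : G} {κ q : ℝ}

lemma lqNorm_vertDiff_le (hq : 1 ≤ q) (A : Finset G) (m : ℕ) (f : G → X) :
    lqNorm q A (vertDiff c m f) ≤ 1 / 2 * lqNorm q A (vertDiff c (2 * m) f)
      + (1 / 2 * lqNorm q A (rightDiff (c ^ m) (vertDiff c m f))
        + 1 / 4 * lqNorm q A (rightDiff (c ^ (2 * m)) (vertDiff c m f))) := by
  have hq₀ : q ≠ 0 := by linarith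
  nth_rewrite 1 [vertDiff_eq_half_smul_vertDiff_two_mul_add]
  refine (lqNorm_add_le hq _ _ _).trans (add_le_add ?_ ((lqNorm_add_le hq _ _ _).trans ?_))
  all_goals simp only [lqNorm_const_smul hq₀]; norm_num

/-- The point `x c ^ k` is joined to `x` through the left ends `x c ^ (2 ^ i * (k / 2 ^ i))` of the
dyadic segments containing it; consecutive segments are nested. -/
lemma norm_vertAvg_sub_vertAvg_two_mul (c : G) (m l : ℕ) (f : G → X) (x : G) :
    ‖vertAvg c m f (x * c ^ (m * l)) - vertAvg c (2 * m) f (x * c ^ (2 * m * (l / 2)))‖ =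
      ‖(1 / 2 : ℝ) • vertDiff c m f (x * c ^ (2 * m * (l / 2)))‖ := by
  rcases Nat.even_or_odd' l with ⟨p, rfl | rfl⟩
  · rw [Nat.mul_div_cancel_left p two_pos, ← mul_assoc, mul_comm m 2, ← norm_neg, vertAvg_two_mul,
      vertDiff, rightDiff]
    congr 1
    module
  · have hp : (2 * p + 1) / 2 = p := by lia
    have hm : c ^ (m * (2 * p + 1)) = c ^ (2 * m * p) * c ^ m := by
      rw [← pow_add]
      congr 1
      ring
    rw [hp, hm, ← mul_assoc, vertAvg_two_mul, vertDiff, rightDiff]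
    congr 1
    module

lemma lqNorm_sub_vertAvg_le (hq : 1 ≤ q) {A B : Finset G} {j k : ℕ} (hk : k < 2 ^ j)
    (hAB : ∀ x ∈ A, ∀ i ≤ k, x * c ^ i ∈ B) (f : G → X) :
    lqNorm q A (fun x => f (x * c ^ k) - vertAvg c (2 ^ j) f x) ≤
      1 / 2 * ∑ i ∈ range j, lqNorm q B (vertDiff c (2 ^ i) f) := by
  have hq₀ : q ≠ 0 := by linarith
  let F : ℕ → G → X := fun i x => vertAvg c (2 ^ i) f (x * c ^ (2 ^ i * (k / 2 ^ i)))
  have htelescope : (fun x => f (x * c ^ k) - vertAvg c (2 ^ j) f x) =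
      ∑ i ∈ range j, (F i - F (i + 1)) := by
    rw [sum_range_sub']
    funext x
    simp [F, vertAvg_one, Nat.div_eq_of_lt hk]
  rw [htelescope, mul_sum]
  refine (lqNorm_sum_le hq _ _ _).trans (sum_le_sum fun i _ => ?_)
  have hhalf := lqNorm_const_smul hq₀ (1 / 2) B (vertDiff c (2 ^ i) f)
  rw [Real.norm_of_nonneg (by norm_num)] at hhalf
  rw [← hhalf]
  refine lqNorm_le_of_injective (by linarith)
    (mul_left_injective (c ^ (2 ^ (i + 1) * (k / 2 ^ (i + 1)))))
    (fun x hx => hAB x hx _ (Nat.mul_div_le _ _)) fun x _ => ?_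
  have hdiv : k / (2 * 2 ^ i) = k / 2 ^ i / 2 := by rw [mul_comm, Nat.div_div_eq_div_mul]
  simp only [F, Pi.sub_apply, Pi.smul_apply, pow_succ', hdiv]
  exact norm_vertAvg_sub_vertAvg_two_mul c (2 ^ i) _ f x

lemma lqNorm_rightDiff_pow_le (hq : 1 ≤ q) {A B : Finset G} {j k : ℕ} (hk : k < 2 ^ j)
    (hAB : ∀ x ∈ A, ∀ i ≤ k, x * c ^ i ∈ B) (f : G → X) :
    lqNorm q A (rightDiff (c ^ k) f) ≤ ∑ i ∈ range j, lqNorm q B (vertDiff c (2 ^ i) f) := by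
  have hsplit : rightDiff (c ^ k) f = (fun x => f (x * c ^ k) - vertAvg c (2 ^ j) f x)
      + (-1 : ℝ) • fun x => f (x * c ^ 0) - vertAvg c (2 ^ j) f x := by
    funext x
    simp [rightDiff]
  have hk' := lqNorm_sub_vertAvg_le hq hk hAB f
  have h₀ := lqNorm_sub_vertAvg_le hq (j := j) (k := 0) (by positivity)
    (fun x hx i hi => hAB x hx i (hi.trans k.zero_le)) f
  rw [hsplit]
  refine (lqNorm_add_le hq _ _ _).trans ?_
  rw [lqNorm_const_smul (by linarith), norm_neg, norm_one]
  linarith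

lemma sum_vertAvg_add_sum_vertDiff_le_of_two_mul (hX : UniformConvexityInequality X κ q)
    {A B : Finset G} {m : ℕ} (hA : A ⊆ B) (hB : ∀ x ∈ A, x * c ^ m ∈ B) (f : G → X) :
    ∑ x ∈ A, ‖vertAvg c (2 * m) f x‖ ^ q + κ * ∑ x ∈ A, ‖vertDiff c m f x‖ ^ q ≤
      ∑ x ∈ B, ‖vertAvg c m f x‖ ^ q := by
  have hshift : ∑ x ∈ A, ‖vertAvg c m f (x * c ^ m)‖ ^ q ≤ ∑ x ∈ B, ‖vertAvg c m f x‖ ^ q :=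
    sum_comp_le_sum_of_injective (mul_left_injective (c ^ m)) hB
      (v := fun x => ‖vertAvg c m f x‖ ^ q) fun x => by positivity
  have hsub : ∑ x ∈ A, ‖vertAvg c m f x‖ ^ q ≤ ∑ x ∈ B, ‖vertAvg c m f x‖ ^ q :=
    sum_le_sum_of_subset_of_nonneg hA fun _ _ _ => by positivity
  have hsum := sum_le_sum fun x (_ : x ∈ A) => hX (vertAvg c m f (x * c ^ m)) (vertAvg c m f x)
  simp only [add_comm (vertAvg c m f (_ * _)), ← vertAvg_two_mul, sum_add_distrib, ← mul_sum,
    ← sum_div] at hsum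
  change _ + κ * ∑ x ∈ A, ‖vertDiff c m f x‖ ^ q ≤ _ at hsum
  linarith

lemma sum_vertAvg_add_sum_sum_vertDiff_le (hκ : 0 ≤ κ) (hX : UniformConvexityInequality X κ q)
    {A B : Finset G} {J : ℕ} (hAB : ∀ x ∈ A, ∀ i < 2 ^ J, x * c ^ i ∈ B) (f : G → X) :
    ∑ x ∈ A, ‖vertAvg c (2 ^ J) f x‖ ^ q
      + κ * ∑ j ∈ range J, ∑ x ∈ A, ‖vertDiff c (2 ^ j) f x‖ ^ q ≤ ∑ x ∈ B, ‖f x‖ ^ q := by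
  classical
  induction J generalizing A with
  | zero =>
    simpa [vertAvg_one] using sum_le_sum_of_subset_of_nonneg (f := fun x => ‖f x‖ ^ q)
      (fun x hx => by simpa using hAB x hx 0 one_pos) fun x _ _ => by positivity
  | succ J ih =>
    set A' := A ∪ A.image (· * c ^ 2 ^ J)
    have hA'B : ∀ x ∈ A', ∀ i < 2 ^ J, x * c ^ i ∈ B := by
      intro x hx i hi
      rcases mem_union.1 hx with hx | hx
      · exact hAB x hx i (by lia)
      · obtain ⟨y, hy, rfl⟩ := mem_image.1 hx
        rw [mul_assoc, ← pow_add]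
        exact hAB y hy _ (by lia)
    have htop := sum_vertAvg_add_sum_vertDiff_le_of_two_mul (c := c) (m := 2 ^ J) hX
      (subset_union_left : A ⊆ A') (fun x hx => mem_union_right _ (mem_image_of_mem _ hx)) f
    have hmono : κ * ∑ j ∈ range J, ∑ x ∈ A, ‖vertDiff c (2 ^ j) f x‖ ^ q ≤
        κ * ∑ j ∈ range J, ∑ x ∈ A', ‖vertDiff c (2 ^ j) f x‖ ^ q := by
      gcongr
      exact subset_union_left
    rw [sum_range_succ, pow_succ', mul_add]
    linarith [ih hA'B]

end LittlewoodPaley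

section HorizontalNorm

open Finset
open scoped Pointwise

variable {G X : Type*} [Group G] [DecidableEq G] [NormedAddCommGroup X]
  {T : Finset G} {c : G} {C : ℕ} {q : ℝ}

/-- The `ℓ^q` norm on the word ball of radius `m` of the horizontal gradient `(∂_s φ)_{s ∈ T}`. -/
noncomputable def horNorm (q : ℝ) (T : Finset G) (φ : G → X) (m : ℕ) : ℝ :=
  lqNorm q (wordBall T m ×ˢ T) fun p => rightDiff p.2 φ p.1

lemma horNorm_nonneg (q : ℝ) (T : Finset G) (φ : G → X) (m : ℕ) : 0 ≤ horNorm q T φ m :=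
  lqNorm_nonneg _ _ _

lemma horNorm_mono (hq : 0 ≤ q) (φ : G → X) {m n : ℕ} (h : m ≤ n) :
    horNorm q T φ m ≤ horNorm q T φ n :=
  lqNorm_mono hq (product_subset_product_left (wordBall_mono h)) _

lemma horNorm_rpow (hq : q ≠ 0) (φ : G → X) (m : ℕ) :
    horNorm q T φ m ^ q = ∑ s ∈ T, ∑ x ∈ wordBall T m, ‖rightDiff s φ x‖ ^ q := by
  rw [horNorm, lqNorm_rpow hq, sum_product_right]

lemma lqNorm_rightDiff_generator_le (hq : 0 < q) {s : G} (hs : s ∈ insert 1 (T ∪ T⁻¹))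
    (φ : G → X) (m : ℕ) : lqNorm q (wordBall T m) (rightDiff s φ) ≤ horNorm q T φ (m + 1) := by
  have hball {x} (hx : x ∈ wordBall T m) : x * s ∈ wordBall T (m + 1) :=
    mul_mem_wordBall hx (by rwa [wordBall, pow_one])
  rw [mem_insert, mem_union, mem_inv'] at hs
  rcases hs with rfl | hs | hs
  · rw [rightDiff_one, lqNorm_zero hq.ne']
    exact horNorm_nonneg _ _ _ _
  · exact lqNorm_le_of_injective hq.le (e := fun x => (x, s)) (Prod.mk_left_injective s)
      (fun x hx => mk_mem_product (wordBall_mono m.le_succ hx) hs) fun x _ => rfl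
  · refine lqNorm_le_of_injective hq.le (e := fun x => (x * s, s⁻¹)) (fun x y hxy => ?_)
      (fun x hx => mk_mem_product (hball hx) hs) fun x _ => ?_
    · exact mul_right_cancel (congrArg Prod.fst hxy)
    · rw [rightDiff, rightDiff, mul_inv_cancel_right, norm_sub_rev]

lemma lqNorm_rightDiff_le (hq : 1 ≤ q) {L : ℕ} {g : G} (hg : g ∈ wordBall T L) (φ : G → X)
    (m : ℕ) : lqNorm q (wordBall T m) (rightDiff g φ) ≤ L * horNorm q T φ (m + L) := by
  have hq₀ : 0 < q := by linarith
  induction L generalizing g with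
  | zero =>
    obtain rfl : g = 1 := by simpa [wordBall] using hg
    simp [rightDiff_one, lqNorm_zero hq₀.ne']
  | succ L ih =>
    rw [wordBall, pow_succ] at hg
    obtain ⟨h, hh, s, hs, rfl⟩ := mem_mul.1 hg
    have hlast : lqNorm q (wordBall T m) (fun x => rightDiff s φ (x * h)) ≤
        horNorm q T φ (m + L + 1) :=
      (lqNorm_le_of_injective hq₀.le (mul_left_injective h)
        (fun x hx => mul_mem_wordBall hx hh) fun x _ => rfl).trans
        (lqNorm_rightDiff_generator_le hq₀ hs φ (m + L))
    have hinit : (L : ℝ) * horNorm q T φ (m + L) ≤ L * horNorm q T φ (m + L + 1) := by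
      gcongr
      exact horNorm_mono hq₀.le φ (m + L).le_succ
    rw [rightDiff_mul, ← add_assoc, Nat.cast_succ, add_one_mul]
    linarith [lqNorm_add_le hq (wordBall T m) (fun x => rightDiff s φ (x * h)) (rightDiff h φ),
      ih hh]

lemma QuadraticallyDistorted.lqNorm_rightDiff_pow_le (hc : QuadraticallyDistorted T C c)
    (hq : 1 ≤ q) {n k : ℕ} (hk : k ≤ n ^ 2) (φ : G → X) (m : ℕ) :
    lqNorm q (wordBall T m) (rightDiff (c ^ k) φ) ≤ 2 * C * √k * horNorm q T φ (m + C * n) := by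
  rcases k.eq_zero_or_pos with rfl | hk₀
  · simp [rightDiff_one, lqNorm_zero (by linarith : q ≠ 0)]
  set l := ⌈√(k : ℝ)⌉₊
  have hkl : k ≤ l ^ 2 := by
    exact_mod_cast (Real.sqrt_le_left (by positivity)).1 (Nat.le_ceil √(k : ℝ))
  have hln : l ≤ n :=
    Nat.ceil_le.2 ((Real.sqrt_le_left n.cast_nonneg).2 (by exact_mod_cast hk))
  have hl : (l : ℝ) ≤ 2 * √k := by
    have h₁ : 1 ≤ √(k : ℝ) := Real.one_le_sqrt.2 (by exact_mod_cast hk₀)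
    linarith [Nat.ceil_lt_add_one (Real.sqrt_nonneg k)]
  calc lqNorm q (wordBall T m) (rightDiff (c ^ k) φ)
      ≤ (C * l : ℕ) * horNorm q T φ (m + C * l) := lqNorm_rightDiff_le hq (hc l k hkl) φ m
    _ ≤ (C * (2 * √k)) * horNorm q T φ (m + C * n) := by
        push_cast
        gcongr
        · exact horNorm_nonneg _ _ _ _
        · exact horNorm_mono (by linarith) φ (by gcongr)
    _ = 2 * C * √k * horNorm q T φ (m + C * n) := by ring

variable [NormedSpace ℝ X] {κ : ℝ}

lemma horNorm_vertAvg_add_sum_horNorm_vertDiff_le (hc : QuadraticallyDistorted T C c)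
    (hcomm : ∀ s ∈ T, Commute s c) (hq : 0 < q) (hκ : 0 ≤ κ)
    (hX : UniformConvexityInequality X κ q) {J n : ℕ} (hJ : 2 ^ J ≤ n ^ 2) (f : G → X) (m : ℕ) :
    horNorm q T (vertAvg c (2 ^ J) f) m ^ q
      + κ * ∑ j ∈ range J, horNorm q T (vertDiff c (2 ^ j) f) m ^ q ≤
        horNorm q T f (m + C * n) ^ q := by
  have hball : ∀ x ∈ wordBall T m, ∀ i < 2 ^ J, x * c ^ i ∈ wordBall T (m + C * n) :=
    fun x hx i hi => mul_mem_wordBall hx (hc n i (hi.le.trans hJ))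
  simp only [horNorm_rpow hq.ne']
  rw [sum_comm (s := range J), mul_sum, ← sum_add_distrib]
  refine sum_le_sum fun s hs => ?_
  simp only [rightDiff_vertAvg (hcomm s hs), rightDiff_vertDiff (hcomm s hs)]
  exact sum_vertAvg_add_sum_sum_vertDiff_le hκ hX hball (rightDiff s f)

end HorizontalNorm

section VerticalOscillation

open Finset

variable {G X : Type*} [Group G] [NormedAddCommGroup X] [NormedSpace ℝ X] {c : G} {κ q : ℝ}

/-- The `ℓ^q` norm on `A` of the vertical difference of `f` at the scale `2 ^ j`, normalised by the
distance `√(2 ^ j)` to which that scale corresponds. -/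
noncomputable def vertOsc (q : ℝ) (c : G) (A : Finset G) (f : G → X) (j : ℕ) : ℝ :=
  (√2 ^ j)⁻¹ * lqNorm q A (vertDiff c (2 ^ j) f)

lemma vertOsc_nonneg (q : ℝ) (c : G) (A : Finset G) (f : G → X) (j : ℕ) :
    0 ≤ vertOsc q c A f j :=
  mul_nonneg (by positivity) (lqNorm_nonneg _ _ _)

lemma lqNorm_vertDiff_eq_mul_vertOsc (q : ℝ) (c : G) (A : Finset G) (f : G → X) (j : ℕ) :
    lqNorm q A (vertDiff c (2 ^ j) f) = √2 ^ j * vertOsc q c A f j := by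
  rw [vertOsc, mul_inv_cancel_left₀ (by positivity)]

lemma sqrt_two_pow (j : ℕ) : √((2 ^ j : ℕ) : ℝ) = √2 ^ j := by
  rw [Nat.cast_pow, Nat.cast_ofNat, Real.sqrt_eq_rpow, Real.sqrt_eq_rpow, Real.rpow_pow_comm]
  norm_num

lemma pow_rpow_one_add_half (q : ℝ) (j : ℕ) :
    ((2 : ℝ) ^ j) ^ (1 + q / 2) = 2 ^ j * (√2 ^ j) ^ q := by
  have hsq : ((2 : ℝ) ^ j) = (√2 ^ j) ^ 2 := by rw [pow_right_comm, Real.sq_sqrt two_pos.le]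
  rw [Real.rpow_add (by positivity), Real.rpow_one, ← sq_rpow_half (a := √2 ^ j) (by positivity),
    ← hsq]

lemma sum_lqNorm_rightDiff_pow_rpow_le (hq : 1 ≤ q) {A B : Finset G} {N : ℕ}
    (hAB : ∀ x ∈ A, ∀ i ≤ N, x * c ^ i ∈ B) (f : G → X) :
    ∑ k ∈ Icc 1 N, lqNorm q A (rightDiff (c ^ k) f) ^ q / (k : ℝ) ^ (1 + q / 2) ≤
      ((1 - (√2)⁻¹)⁻¹) ^ q * ∑ j ∈ range (Nat.log 2 N + 1), vertOsc q c B f j ^ q := by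
  have hq₀ : 0 ≤ q := by linarith
  refine (sum_Icc_le_sum_dyadic (φ := fun j =>
    ((√2 ^ j)⁻¹ * ∑ i ∈ range (j + 1), √2 ^ i * vertOsc q c B f i) ^ q) (fun j => ?_)
    fun k hk => ?_).trans
    (sum_geometric_mean_rpow_le hq Real.one_lt_sqrt_two (vertOsc_nonneg q c B f) _)
  · exact Real.rpow_nonneg (mul_nonneg (by positivity)
      (sum_nonneg fun i _ => mul_nonneg (by positivity) (vertOsc_nonneg _ _ _ _ _))) q
  set j := Nat.log 2 k
  obtain ⟨hk₁, hkN⟩ := mem_Icc.1 hk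
  have hjk : (2 : ℝ) ^ j ≤ k := by exact_mod_cast Nat.pow_log_le_self 2 (by lia)
  have hV : lqNorm q A (rightDiff (c ^ k) f) ≤ ∑ i ∈ range (j + 1), √2 ^ i * vertOsc q c B f i := by
    simp only [← lqNorm_vertDiff_eq_mul_vertOsc]
    exact lqNorm_rightDiff_pow_le hq (Nat.lt_pow_succ_log_self one_lt_two k)
      (fun x hx i hi => hAB x hx i (hi.trans hkN)) f
  rw [Real.mul_rpow (by positivity) ((lqNorm_nonneg _ _ _).trans hV), Real.inv_rpow (by positivity),
    ← mul_assoc, ← mul_inv, ← pow_rpow_one_add_half, inv_mul_eq_div]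
  exact div_le_div₀ (Real.rpow_nonneg ((lqNorm_nonneg _ _ _).trans hV) q)
    (Real.rpow_le_rpow (lqNorm_nonneg _ _ _) hV hq₀) (by positivity)
    (Real.rpow_le_rpow (by positivity) hjk (by positivity))

variable [DecidableEq G] {T : Finset G} {C J n : ℕ}

lemma QuadraticallyDistorted.vertOsc_le_mul_vertOsc_succ_add (hc : QuadraticallyDistorted T C c)
    (hq : 1 ≤ q) {j : ℕ} (hj : 2 ^ (j + 1) ≤ n ^ 2) (f : G → X) (r : ℕ) :
    vertOsc q c (wordBall T r) f j ≤ (√2)⁻¹ * vertOsc q c (wordBall T r) f (j + 1)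
      + 2 * C * horNorm q T (vertDiff c (2 ^ j) f) (r + C * n) := by
  have h₁ := hc.lqNorm_rightDiff_pow_le hq ((Nat.pow_le_pow_right two_pos j.le_succ).trans hj)
    (vertDiff c (2 ^ j) f) r
  have h₂ := hc.lqNorm_rightDiff_pow_le hq hj (vertDiff c (2 ^ j) f) r
  set H := horNorm q T (vertDiff c (2 ^ j) f) (r + C * n)
  have hH₀ : 0 ≤ H := horNorm_nonneg _ _ _ _
  have h := lqNorm_vertDiff_le (c := c) hq (wordBall T r) (2 ^ j) f
  rw [← pow_succ', lqNorm_vertDiff_eq_mul_vertOsc, lqNorm_vertDiff_eq_mul_vertOsc] at h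
  rw [sqrt_two_pow] at h₁ h₂
  have hinv : (√2)⁻¹ = √2 / 2 := Real.sqrt_div_self.symm
  have hsqrt : √2 ^ j * √2 * (C * H) ≤ √2 ^ j * 2 * (C * H) := by
    gcongr
    exact (Real.sqrt_le_left two_pos.le).2 (by norm_num)
  refine le_of_mul_le_mul_left ?_ (by positivity : 0 < √2 ^ j)
  rw [pow_succ √2] at h h₂
  rw [hinv]
  linarith

lemma QuadraticallyDistorted.vertOsc_le_mul_horNorm_vertAvg (hc : QuadraticallyDistorted T C c)
    (hq : 1 ≤ q) (hJ : 2 ^ J ≤ n ^ 2) (f : G → X) (r : ℕ) :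
    vertOsc q c (wordBall T r) f J ≤
      2 * C * horNorm q T (vertAvg c (2 ^ J) f) (r + C * n) := by
  refine le_of_mul_le_mul_left ?_ (by positivity : 0 < √2 ^ J)
  have h := hc.lqNorm_rightDiff_pow_le hq hJ (vertAvg c (2 ^ J) f) r
  rw [sqrt_two_pow] at h
  rw [← lqNorm_vertDiff_eq_mul_vertOsc, vertDiff]
  linarith

lemma QuadraticallyDistorted.sum_vertOsc_rpow_le (hc : QuadraticallyDistorted T C c)
    (hcomm : ∀ s ∈ T, Commute s c) (hq : 1 ≤ q) (hκ : 0 < κ)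
    (hX : UniformConvexityInequality X κ q) (hJ : 2 ^ J ≤ n ^ 2) (f : G → X) (r : ℕ) :
    ∑ j ∈ range (J + 1), vertOsc q c (wordBall T r) f j ^ q ≤
      ((1 - (√2)⁻¹)⁻¹) ^ q * ((2 * C) ^ q * (1 + κ⁻¹) * horNorm q T f (r + 2 * C * n) ^ q) := by
  have hq₀ : 0 < q := by linarith
  set Δ := ∑ j ∈ range J, horNorm q T (vertDiff c (2 ^ j) f) (r + C * n) ^ q
  have hrec := sum_rpow_le_of_le_mul_succ_add hq (inv_nonneg.2 (Real.sqrt_nonneg 2))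
    (inv_lt_one_of_one_lt₀ Real.one_lt_sqrt_two) (vertOsc_nonneg q c (wordBall T r) f)
    (fun j => mul_nonneg (by positivity)
      (horNorm_nonneg q T (vertDiff c (2 ^ j) f) (r + C * n)))
    fun j hj => hc.vertOsc_le_mul_vertOsc_succ_add hq
      ((Nat.pow_le_pow_right two_pos hj).trans hJ) f r
  have hLP := horNorm_vertAvg_add_sum_horNorm_vertDiff_le hc hcomm hq₀ hκ.le hX hJ f (r + C * n)
  have hr : r + C * n + C * n = r + 2 * C * n := by ring
  rw [hr] at hLP
  have hΛ : 0 ≤ ((1 - (√2)⁻¹)⁻¹) ^ q := Real.rpow_nonneg inv_one_sub_inv_sqrt_two_pos.le q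
  have hA : 0 ≤ horNorm q T (vertAvg c (2 ^ J) f) (r + C * n) ^ q :=
    Real.rpow_nonneg (horNorm_nonneg _ _ _ _) q
  have hΔ₀ : 0 ≤ Δ := sum_nonneg fun j _ => Real.rpow_nonneg (horNorm_nonneg _ _ _ _) q
  have hΔ : Δ ≤ κ⁻¹ * horNorm q T f (r + 2 * C * n) ^ q := by
    rw [le_inv_mul_iff₀ hκ]
    linarith
  have htop : vertOsc q c (wordBall T r) f J ^ q ≤
      (2 * C) ^ q * horNorm q T (vertAvg c (2 ^ J) f) (r + C * n) ^ q := by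
    rw [← Real.mul_rpow (by positivity) (horNorm_nonneg _ _ _ _)]
    exact Real.rpow_le_rpow (vertOsc_nonneg _ _ _ _ _)
      (hc.vertOsc_le_mul_horNorm_vertAvg hq hJ f r) hq₀.le
  simp only [Real.mul_rpow (by positivity : (0 : ℝ) ≤ 2 * C) (horNorm_nonneg _ _ _ _),
    ← mul_sum] at hrec
  refine hrec.trans (mul_le_mul_of_nonneg_left ?_ hΛ)
  refine (add_le_add_left htop _).trans ?_
  rw [← mul_add, mul_assoc]
  gcongr
  linarith [mul_nonneg hκ.le hΔ₀]

end VerticalOscillation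

section Poincare

open Finset

theorem QuadraticallyDistorted.sum_rightDiff_pow_rpow_le {G X : Type*} [Group G] [DecidableEq G]
    [NormedAddCommGroup X] [NormedSpace ℝ X] {T : Finset G} {c : G} {C : ℕ} {κ q : ℝ}
    (hc : QuadraticallyDistorted T C c) (hcomm : ∀ s ∈ T, Commute s c) (hq : 1 ≤ q) (hκ : 0 < κ)
    (hX : UniformConvexityInequality X κ q) (n : ℕ) (f : G → X) :
    ∑ k ∈ Icc 1 (n ^ 2), lqNorm q (wordBall T n) (rightDiff (c ^ k) f) ^ q / (k : ℝ) ^ (1 + q / 2) ≤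
      ((1 - (√2)⁻¹)⁻¹) ^ q * (((1 - (√2)⁻¹)⁻¹) ^ q *
        ((2 * C) ^ q * (1 + κ⁻¹) * horNorm q T f ((1 + 3 * C) * n) ^ q)) := by
  have hΛ : 0 ≤ ((1 - (√2)⁻¹)⁻¹) ^ q := Real.rpow_nonneg inv_one_sub_inv_sqrt_two_pos.le q
  rcases n.eq_zero_or_pos with rfl | hn
  · simpa using mul_nonneg hΛ (mul_nonneg hΛ (mul_nonneg (by positivity)
      (Real.rpow_nonneg (horNorm_nonneg q T f _) q)))
  have hr : (1 + 3 * C) * n = n + C * n + 2 * C * n := by ring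
  rw [hr]
  exact (sum_lqNorm_rightDiff_pow_rpow_le hq
    (fun x hx i hi => mul_mem_wordBall hx (hc n i hi)) f).trans
    (mul_le_mul_of_nonneg_left (hc.sum_vertOsc_rpow_le hcomm hq hκ hX
      (Nat.pow_log_le_self 2 (by positivity)) f _) hΛ)

theorem vertical_vs_horizontal_poincare_general {η q : ℝ} (hη : 0 < η) (hη₁ : η ≤ 1) (hq : 2 ≤ q)
    {C : ℕ} (hC : 0 < C) :
    ∃ K : ℝ, 0 < K ∧
      ∀ (G : Type*) [Group G] [DecidableEq G] (T : Finset G) (c : G),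
        (∀ s ∈ T, Commute s c) → QuadraticallyDistorted T C c →
      ∀ (X : Type*) [NormedAddCommGroup X] [NormedSpace ℝ X], HasPowerTypeModulus X η q →
      ∀ (n : ℕ) (f : G → X),
        ∑ k ∈ Icc 1 (n ^ 2), ∑ x ∈ wordBall T n,
            ‖f (x * c ^ k) - f x‖ ^ q / (k : ℝ) ^ (1 + q / 2) ≤
          K * ∑ x ∈ wordBall T ((1 + 3 * C) * n), ∑ s ∈ T, ‖f (x * s) - f x‖ ^ q := by
  have hq₀ : q ≠ 0 := by linarith
  have hΛ : 0 < ((1 - (√2)⁻¹)⁻¹) ^ q := Real.rpow_pos_of_pos inv_one_sub_inv_sqrt_two_pos q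
  refine ⟨((1 - (√2)⁻¹)⁻¹) ^ q * (((1 - (√2)⁻¹)⁻¹) ^ q *
    ((2 * C) ^ q * (1 + ((η / 16) ^ q)⁻¹))), by positivity, ?_⟩
  intro G _ _ T c hcomm hc X _ _ hX n f
  have h := hc.sum_rightDiff_pow_rpow_le hcomm (by linarith) (by positivity)
    (hX.uniformConvexityInequality hη.le hη₁ hq) n f
  rw [horNorm, lqNorm_rpow hq₀, sum_product] at h
  simp only [lqNorm_rpow hq₀, sum_div] at h
  simpa only [rightDiff, mul_assoc] using h

end Poincare

namespace DH

open Finset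
open scoped Pointwise

instance : DecidableEq DH := fun _ _ => decidable_of_iff' _ DH.ext_iff

lemma gA_pow (k : ℕ) : gA ^ k = ⟨k, 0, 0⟩ := by
  induction k with
  | zero => rfl
  | succ k ih =>
    rw [pow_succ, ih]
    simp [gA, mul_def]

lemma gB_pow (k : ℕ) : gB ^ k = ⟨0, k, 0⟩ := by
  induction k with
  | zero => rfl
  | succ k ih =>
    rw [pow_succ, ih]
    simp [gB, mul_def]

lemma gC_eq : gC = ⟨0, 0, 1⟩ := by
  simp [gC, gA, gB, mul_def, inv_def]

lemma gC_pow (k : ℕ) : gC ^ k = ⟨0, 0, k⟩ := by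
  induction k with
  | zero => rfl
  | succ k ih =>
    rw [pow_succ, ih]
    simp [gC_eq, mul_def]

lemma commute_gC (g : DH) : Commute g gC := by
  simp [commute_iff_eq, gC_eq, mul_def, add_comm]

lemma gA_zpow (k : ℤ) : gA ^ k = ⟨k, 0, 0⟩ := by
  obtain ⟨k, rfl | rfl⟩ := k.eq_nat_or_neg <;> simp [gA_pow, inv_def]

lemma gB_zpow (k : ℤ) : gB ^ k = ⟨0, k, 0⟩ := by
  obtain ⟨k, rfl | rfl⟩ := k.eq_nat_or_neg <;> simp [gB_pow, inv_def]

lemma gC_zpow (k : ℤ) : gC ^ k = ⟨0, 0, k⟩ := by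
  obtain ⟨k, rfl | rfl⟩ := k.eq_nat_or_neg <;> simp [gC_pow, inv_def]

lemma closure_gA_gB : Subgroup.closure {gA, gB} = ⊤ := by
  set H := Subgroup.closure {gA, gB}
  have ha : gA ∈ H := Subgroup.subset_closure (by simp)
  have hb : gB ∈ H := Subgroup.subset_closure (by simp)
  have hc : gC ∈ H := mul_mem (mul_mem (mul_mem ha hb) (inv_mem ha)) (inv_mem hb)
  refine eq_top_iff.2 fun g _ => ?_
  have hg : g = gB ^ g.y * gA ^ g.x * gC ^ g.z := by
    simp [gA_zpow, gB_zpow, gC_zpow, mul_def]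
  rw [hg]
  exact mul_mem (mul_mem (zpow_mem hb _) (zpow_mem ha _)) (zpow_mem hc _)

lemma wordLen_le_iff_mem_wordBall {n : ℕ} {g : DH} :
    wordLen g ≤ n ↔ g ∈ wordBall {gA, gB} n := by
  have hgens : ∀ s : DH,
      s ∈ ({gA, gB} : Finset DH) ∪ {gA, gB}⁻¹ ↔ s ∈ ({gA, gB, gA⁻¹, gB⁻¹} : Set DH) := by
    simp only [mem_union, mem_inv', mem_insert, mem_singleton, inv_eq_iff_eq_inv, or_assoc,
      Set.mem_insert_iff, Set.mem_singleton_iff, implies_true]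
  simp only [mem_wordBall_iff_exists_list, hgens]
  constructor
  · intro h
    obtain ⟨m, hm⟩ : ∃ m, g ∈ wordBall {gA, gB} m :=
      exists_mem_wordBall_of_mem_closure (by simp [closure_gA_gB])
    simp only [mem_wordBall_iff_exists_list, hgens] at hm
    obtain ⟨l₀, -, hl₀⟩ := hm
    obtain ⟨l, hl, hlg⟩ := Nat.sInf_mem (s := {n | ∃ l : List DH, l.length = n ∧
      (∀ s ∈ l, s ∈ ({gA, gB, gA⁻¹, gB⁻¹} : Set DH)) ∧ l.prod = g}) ⟨_, l₀, rfl, hl₀⟩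
    exact ⟨l, hl.trans_le h, hlg⟩
  · rintro ⟨l, hl, hlg⟩
    exact le_trans (Nat.sInf_le ⟨l, rfl, hlg⟩) hl

lemma Ball_eq_wordBall (n : ℕ) : Ball n = wordBall {gA, gB} n := by
  ext g
  simp only [Ball, dW, mul_one, Set.mem_ofPred_eq, wordLen_le_iff_mem_wordBall, mem_coe]
  exact ⟨fun h => inv_inv g ▸ inv_mem_wordBall h, inv_mem_wordBall⟩

lemma tsum_Ball (n : ℕ) (φ : DH → ℝ) : ∑' x : Ball n, φ x = ∑ x ∈ wordBall {gA, gB} n, φ x := by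
  rw [Ball_eq_wordBall, ← Finset.tsum_subtype']

lemma gC_pow_eq_word (l r t : ℕ) :
    gC ^ ((r + 1 + t) * l + r + 1) =
      gA ^ (r + 1) * gB ^ 1 * gA ^ t * gB ^ l * (gA ^ (r + 1 + t))⁻¹ * (gB ^ (l + 1))⁻¹ := by
  ext <;> simp only [gA_pow, gB_pow, gC_pow, mul_def, inv_def] <;> push_cast <;> ring

lemma quadraticallyDistorted_gC : QuadraticallyDistorted {gA, gB} 4 gC := by
  intro n k hk
  rcases k.eq_zero_or_pos with rfl | hk₀
  · simpa using one_mem_wordBall (4 * n)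
  have hn : 0 < n := Nat.pos_of_ne_zero (by rintro rfl; lia)
  obtain ⟨l, r, hr, rfl⟩ : ∃ l r, r < n ∧ k = n * l + r + 1 :=
    ⟨(k - 1) / n, (k - 1) % n, Nat.mod_lt _ hn, by have := Nat.div_add_mod (k - 1) n; lia⟩
  have hl : l < n := by nlinarith
  obtain ⟨t, rfl⟩ : ∃ t, n = r + 1 + t := ⟨n - (r + 1), by lia⟩
  have hA : gA ∈ wordBall {gA, gB} 1 := mem_wordBall_one (by simp)
  have hB : gB ∈ wordBall {gA, gB} 1 := mem_wordBall_one (by simp)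
  rw [gC_pow_eq_word]
  refine wordBall_mono (m := r + 1 + 1 + t + l + (r + 1 + t) + (l + 1)) (by lia) ?_
  exact mul_mem_wordBall (mul_mem_wordBall (mul_mem_wordBall (mul_mem_wordBall
    (mul_mem_wordBall (pow_mem_wordBall hA _) (pow_mem_wordBall hB _)) (pow_mem_wordBall hA _))
    (pow_mem_wordBall hB _)) (inv_mem_wordBall (pow_mem_wordBall hA _)))
    (inv_mem_wordBall (pow_mem_wordBall hB _))

end DH

open DH in
/-- Theorem 1.1 (Vertical versus horizontal Poincaré inequality). -/
theorem vertical_vs_horizontal_poincare (η : ℝ) (hη : η ∈ Set.Ioo (0 : ℝ) 1)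
    (q : ℝ) (hq : 2 ≤ q) :
    ∃ K : ℝ, 0 < K ∧
      ∀ (X : Type) [NormedAddCommGroup X] [NormedSpace ℝ X] [CompleteSpace X],
        (∀ ε ∈ Set.Ioo (0 : ℝ) 1, ∀ x y : X, ‖x‖ = 1 → ‖y‖ = 1 → ε ≤ ‖x - y‖ →
          ‖x + y‖ ≤ 2 * (1 - (η * ε) ^ q)) →
        ∀ (n : ℕ) (f : DH → X),
          ∑ k ∈ Finset.Icc 1 (n ^ 2),
              ∑' x : Ball n, ‖f (↑x * gC ^ k) - f ↑x‖ ^ q / (k : ℝ) ^ (1 + q / 2) ≤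
            K * ∑' x : Ball (21 * n),
              (‖f (↑x * gA) - f ↑x‖ ^ q + ‖f (↑x * gB) - f ↑x‖ ^ q) := by
  obtain ⟨K, hK, h⟩ :=
    vertical_vs_horizontal_poincare_general hη.1 hη.2.le hq (C := 4) (by norm_num)
  refine ⟨K, hK, fun X _ _ _ hX n f => ?_⟩
  have hab : gA ≠ gB := by decide
  calc _ = ∑ k ∈ Finset.Icc 1 (n ^ 2), ∑ x ∈ wordBall {gA, gB} n,
        ‖f (x * gC ^ k) - f x‖ ^ q / (k : ℝ) ^ (1 + q / 2) :=
        Finset.sum_congr rfl fun k _ =>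
          tsum_Ball n fun x => ‖f (x * gC ^ k) - f x‖ ^ q / (k : ℝ) ^ (1 + q / 2)
    _ ≤ K * ∑ x ∈ wordBall {gA, gB} ((1 + 3 * 4) * n), ∑ s ∈ {gA, gB}, ‖f (x * s) - f x‖ ^ q :=
        h DH {gA, gB} gC (fun s _ => commute_gC s) quadraticallyDistorted_gC X hX n f
    _ ≤ K * ∑ x ∈ wordBall {gA, gB} (21 * n), ∑ s ∈ {gA, gB}, ‖f (x * s) - f x‖ ^ q := by
        gcongr
        exact wordBall_mono (by lia)
    _ = _ := by
        simp only [Finset.sum_pair hab]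
        rw [tsum_Ball (21 * n) fun x => ‖f (x * gA) - f x‖ ^ q + ‖f (x * gB) - f x‖ ^ q]
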